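/- Let k ≥ 1. Let (Q₁, δ₁, c₁, q₁) and (Q₂, δ₂, c₂, q₂) be two finite invertible automata over ℤ/kℤ: Q₁, Q₂ are finite sets with decidable equality, δᵢ : Qᵢ → ZMod k → Qᵢ, cᵢ : Qᵢ → ZMod k, and qᵢ are initial states. Let actᵢ : Qᵢ → List (ZMod k) → List (ZMod k) satisfy actᵢ q [] = [] and actᵢ q (a :: u) = (a + cᵢ q) :: actᵢ (δᵢ q a) u, and let actP : (List (ZMod k) → ZMod k) → List (ZMod k) → List (ZMod k) satisfy actP d [] = [] and actP d (a :: u) = (a + d []) :: actP (fun w => d (a :: w)) u. Assume act₁ q₁ and act₂ q₂ are both spherically transitive (for every n and all lists u, w of length n there exists m with (actᵢ qᵢ)^[m] u = w). Let Aᵢ be the incidence matrix of the i-th automaton over ZMod k and vᵢ = cᵢ. Then there exists a portrait d : List (ZMod k) → ZMod k with actP d (act₁ q₁ u) = act₂ q₂ (actP d u) for all lists u (i.e. the two automorphisms are conjugate in the infinite iterated wreath product) if and only if ((A₁^j).mulVec v₁) q₁ = ((A₂^j).mulVec v₂) q₂ for every j ≤ k^(Fintype.card Q₁ + Fintype.card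 Q₂). -/

import Mathlib

/-!
Write an automorphism of the tree as a portrait `e`, labelling each vertex by the rotation applied
there. Comparing labels of both sides vertex by vertex, `d` conjugates `e₁` to `e₂` iff
`d (e₁ · u) = d u + (e₂ (d · u) - e₁ u)` for all words `u`. On level `n` the right-hand bracket only
involves the labels of `d` above level `n`, so `d` can be built level by level, each level being a
coboundary equation for the permutation induced by `e₁`. When that permutation is a single cycle,
the equation is solvable iff the bracket sums to `0` over the level, i.e. iff `e₁` and `e₂` have the
same label sum on level `n`.

For an automaton with incidence matrix `A` and labels `c`, the label sum on level `n` is the `q`-th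
entry of `A ^ n *ᵥ c`. By Cayley–Hamilton applied to the block matrix `diag(A₁, A₂)`, two such
sequences agree as soon as their first `card Q₁ + card Q₂` terms do.
-/

open Finset Function Matrix Equiv.Perm

section Coboundary

variable {α M G : Type*} {σ : Equiv.Perm α} {s : Finset α}

theorem sum_range_card_pow_apply [AddCommMonoid M] (hσ : σ.IsCycleOn s) {a : α} (ha : a ∈ s)
    (f : α → M) : ∑ i ∈ range #s, f ((σ ^ i) a) = ∑ x ∈ s, f x := by
  classical
  simpa [ha] using (sum_smul_sum_eq_sum_perm hσ (fun x => if x = a then 1 else 0 : α → ℕ) f).symm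

theorem exists_apply_eq_add_of_sum_eq_zero [AddCommMonoid M] (hσ : σ.IsCycleOn s) {f : α → M}
    (hf : ∑ x ∈ s, f x = 0) : ∃ g : α → M, ∀ x ∈ s, g (σ x) = g x + f x := by
  obtain rfl | ⟨a, ha⟩ := s.eq_empty_or_nonempty
  · exact ⟨0, by simp⟩
  let S (n : ℕ) : M := ∑ i ∈ range n, f ((σ ^ i) a)
  have hS_periodic : Periodic S #s := fun n => by
    calc S (n + #s) = ∑ i ∈ range #s, f ((σ ^ i) a) + ∑ i ∈ range n, f ((σ ^ (i + #s)) a) := by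
          simp only [S, add_comm _ #s, sum_range_add]
      _ = ∑ i ∈ range n, f ((σ ^ (i + #s)) a) := by
          rw [sum_range_card_pow_apply hσ ha, hf, zero_add]
      _ = S n := by simp only [S, pow_add, mul_apply, hσ.pow_card_apply ha]
  have hS_congr {m n : ℕ} (h : (σ ^ m) a = (σ ^ n) a) : S m = S n := by
    rw [← hS_periodic.map_mod_nat m, ← hS_periodic.map_mod_nat n,
      (hσ.pow_apply_eq_pow_apply ha).1 h]
  have hexp (x : α) (hx : x ∈ s) : ∃ n : ℕ, (σ ^ n) a = x :=
    hσ.exists_pow_eq' s.finite_toSet ha hx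
  choose! exp hexp using hexp
  refine ⟨fun x => S (exp x), fun x hx => ?_⟩
  calc S (exp (σ x)) = S (exp x + 1) :=
        hS_congr (by rw [hexp _ (hσ.apply_mem_iff.2 hx), pow_succ', mul_apply, hexp x hx])
    _ = S (exp x) + f x := by simp only [S, sum_range_succ, hexp x hx]

end Coboundary

section Level

/-- The words of length `n`, i.e. the `n`-th level of the tree `List G`. -/
noncomputable def level (G : Type*) [Finite G] (n : ℕ) : Finset (List G) :=
  (List.finite_length_eq G n).toFinset

variable {G M : Type*}

@[simp]
theorem mem_level [Finite G] {n : ℕ} {u : List G} : u ∈ level G n ↔ u.length = n := by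
  simp [level]

@[simp]
theorem level_zero [Finite G] : level G 0 = {[]} := by
  ext u
  simp

theorem sum_level_succ [Fintype G] [AddCommMonoid M] (n : ℕ) (f : List G → M) :
    ∑ u ∈ level G (n + 1), f u = ∑ a, ∑ u ∈ level G n, f (a :: u) := by
  rw [← sum_product']
  refine (sum_nbij (fun p : G × List G => p.1 :: p.2) ?_ ?_ ?_ fun _ _ => rfl).symm
  · simp
  · rintro ⟨a, u⟩ - ⟨b, w⟩ - h
    simpa using h
  · rintro (_ | ⟨a, u⟩) hu
    · simp at hu
    · exact ⟨(a, u), by simpa using hu, rfl⟩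

/-- Transitivity on every level of the tree `List G` of the forward iterates of `T`. -/
def IsSphericallyTransitive (T : List G → List G) : Prop :=
  ∀ (n : ℕ) (u w : List G), u.length = n → w.length = n → ∃ m : ℕ, T^[m] u = w

end Level

/-- A portrait assigns to every vertex of the tree `List G` the element of `G` by which an
automorphism translates the children of that vertex. -/
abbrev Portrait (G : Type*) := List G → G

namespace Portrait

variable {G : Type*}

section Action

/-- The tree automorphism with portrait `d`. -/
def act [Add G] : Portrait G → List G → List G
  | _, [] => []
  | d, a :: u => (a + d []) :: act (fun w => d (a :: w)) u

theorem eq_act [Add G] {actP : Portrait G → List G → List G} (hnil : ∀ d, actP d [] = [])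
    (hcons : ∀ d a u, actP d (a :: u) = (a + d []) :: actP (fun w => d (a :: w)) u) :
    actP = act := by
  funext d u
  induction u generalizing d with
  | nil => rw [hnil, act]
  | cons a u ih => rw [hcons, ih, act]

@[simp]
theorem length_act [Add G] (d : Portrait G) (u : List G) : (d.act u).length = u.length := by
  induction u generalizing d with
  | nil => rfl
  | cons a u ih => simp [act, ih]

theorem act_append_singleton [Add G] (d : Portrait G) (u : List G) (a : G) :
    d.act (u ++ [a]) = d.act u ++ [a + d u] := by
  induction u generalizing d with
  | nil => rfl
  | cons b u ih => simp [act, ih]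

theorem act_congr [Add G] {d e : Portrait G} {u : List G}
    (h : ∀ w : List G, w.length < u.length → d w = e w) : d.act u = e.act u := by
  induction u generalizing d e with
  | nil => rfl
  | cons a u ih =>
    rw [act, act, h [] (by simp), ih fun w hw => h (a :: w) (by simpa using hw)]

theorem act_injective [Add G] [IsRightCancelAdd G] (d : Portrait G) : Injective d.act := by
  intro u w h
  induction u generalizing d w with
  | nil => simpa using (congrArg List.length h).symm
  | cons a u ih =>
    obtain _ | ⟨b, w⟩ := w
    · simp [act] at h
    · simp only [act, List.cons.injEq, add_left_inj] at h
      obtain ⟨rfl, h⟩ := h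
      rw [ih _ h]

theorem act_surjective [AddGroup G] (d : Portrait G) : Surjective d.act := by
  intro w
  induction w generalizing d with
  | nil => exact ⟨[], rfl⟩
  | cons b w ih =>
    obtain ⟨u, hu⟩ := ih fun w => d ((b - d []) :: w)
    exact ⟨(b - d []) :: u, by rw [act, hu, sub_add_cancel]⟩

/-- The action of a portrait, as a permutation of the vertices of the tree. -/
noncomputable def actPerm [AddGroup G] (d : Portrait G) : Equiv.Perm (List G) :=
  .ofBijective d.act ⟨d.act_injective, d.act_surjective⟩

@[simp]
theorem coe_actPerm [AddGroup G] (d : Portrait G) : ⇑d.actPerm = d.act := rfl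

theorem sum_level_act [AddGroup G] [Finite G] {M : Type*} [AddCommMonoid M] (d : Portrait G)
    (n : ℕ) (f : List G → M) : ∑ u ∈ level G n, f (d.act u) = ∑ u ∈ level G n, f u :=
  sum_equiv d.actPerm (by simp) (by simp)

theorem isCycleOn_level [AddGroup G] [Finite G] {d : Portrait G}
    (hd : IsSphericallyTransitive d.act) (n : ℕ) : d.actPerm.IsCycleOn (level G n) := by
  refine ⟨d.actPerm.bijOn (by simp), fun u hu w hw => ?_⟩
  obtain ⟨m, hm⟩ := hd n u w (by simpa using hu) (by simpa using hw)
  exact ⟨m, by rw [zpow_natCast, ← iterate_eq_pow, coe_actPerm, hm]⟩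

end Action

section Truncate

/-- The portrait that agrees with `d` on words of length less than `n` and is trivial elsewhere. -/
def truncate [Zero G] (d : Portrait G) (n : ℕ) : Portrait G :=
  fun w => if w.length < n then d w else 0

theorem act_truncate_length [Zero G] [Add G] (d : Portrait G) (u : List G) :
    (d.truncate u.length).act u = d.act u :=
  act_congr fun _ hw => if_pos hw

theorem exists_eq_apply_truncate [Zero G] (F : ℕ → Portrait G → Portrait G) :
    ∃ d : Portrait G, ∀ u, d u = F u.length (d.truncate u.length) u := by
  refine ⟨(measure List.length).wf.fix fun u rec =>
    F u.length (fun w => if h : w.length < u.length then rec w h else 0) u, fun u => ?_⟩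
  rw [WellFounded.fix_eq]
  rfl

end Truncate

section Conjugacy

variable [AddCommGroup G] {d e₁ e₂ : Portrait G}

theorem semiconj_act_iff :
    Semiconj d.act e₁.act e₂.act ↔ ∀ u, d (e₁.act u) = d u + (e₂ (d.act u) - e₁ u) := by
  have label_eq_iff (u : List G) : d (e₁.act u) = d u + (e₂ (d.act u) - e₁ u) ↔
      e₁ u + d (e₁.act u) = d u + e₂ (d.act u) := by
    rw [← add_sub_assoc, eq_sub_iff_add_eq']
  simp only [label_eq_iff]
  refine ⟨fun h u => ?_, fun h u => ?_⟩
  · have := h (u ++ [0])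
    simpa [act_append_singleton, h.eq u] using this
  · induction u using List.reverseRecOn with
    | nil => rfl
    | append_singleton u a ih => simp only [act_append_singleton, ih, add_assoc, h u]

theorem sum_level_eq_of_semiconj_act [Finite G] (h : Semiconj d.act e₁.act e₂.act) (n : ℕ) :
    ∑ u ∈ level G n, e₁ u = ∑ u ∈ level G n, e₂ u := by
  have := sum_congr rfl fun u (_ : u ∈ level G n) => semiconj_act_iff.1 h u
  simpa [sum_add_distrib, sum_sub_distrib, sum_level_act, sub_eq_zero, eq_comm] using this

theorem exists_semiconj_act [Finite G] (he₁ : IsSphericallyTransitive e₁.act)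
    (hsum : ∀ n, ∑ u ∈ level G n, e₁ u = ∑ u ∈ level G n, e₂ u) :
    ∃ d : Portrait G, Semiconj d.act e₁.act e₂.act := by
  have solve_level (n : ℕ) (d : Portrait G) : ∃ g : Portrait G, ∀ u ∈ level G n,
      g (e₁.act u) = g u + (e₂ (d.act u) - e₁ u) :=
    exists_apply_eq_add_of_sum_eq_zero (isCycleOn_level he₁ n)
      (by rw [sum_sub_distrib, sum_level_act, hsum, sub_self])
  choose F hF using solve_level
  obtain ⟨d, hd⟩ := exists_eq_apply_truncate F
  refine ⟨d, semiconj_act_iff.2 fun u => ?_⟩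
  rw [hd (e₁.act u), hd u, length_act, hF _ _ u (mem_level.2 rfl), act_truncate_length]

theorem exists_semiconj_act_iff [Finite G] (he₁ : IsSphericallyTransitive e₁.act) :
    (∃ d : Portrait G, Semiconj d.act e₁.act e₂.act) ↔
      ∀ n, ∑ u ∈ level G n, e₁ u = ∑ u ∈ level G n, e₂ u :=
  ⟨fun ⟨_, hd⟩ => sum_level_eq_of_semiconj_act hd, exists_semiconj_act he₁⟩

end Conjugacy

section Automaton

variable {Q : Type*}

/-- The portrait of the state `q` of the automaton with transitions `δ` and labels `c`: the vertex
`w` carries the label of the state reached from `q` by reading `w`. -/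
def ofAutomaton (δ : Q → G → Q) (c : Q → G) (q : Q) : Portrait G :=
  fun w => c (w.foldl δ q)

theorem eq_act_ofAutomaton [Add G] {δ : Q → G → Q} {c : Q → G} {actQ : Q → List G → List G}
    (hnil : ∀ q, actQ q [] = [])
    (hcons : ∀ q a u, actQ q (a :: u) = (a + c q) :: actQ (δ q a) u) (q : Q) :
    actQ q = (ofAutomaton δ c q).act := by
  funext u
  induction u generalizing q with
  | nil => rw [hnil, act]
  | cons a u ih =>
    rw [hcons, ih]
    rfl

end Automaton

end Portrait

section IncidenceMatrix

variable {X Q : Type*} (R : Type*) [Fintype X] [DecidableEq Q]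

/-- The incidence matrix of an automaton with transitions `δ`: its `(q, r)` entry is the number of
letters leading from `q` to `r`, cast into the coefficient ring `R`. -/
def incidenceMatrix [NatCast R] (δ : Q → X → Q) : Matrix Q Q R :=
  of fun q r => (#{a | δ q a = r} : R)

variable {R}

theorem incidenceMatrix_mulVec [NonAssocSemiring R] [Fintype Q] (δ : Q → X → Q) (v : Q → R)
    (q : Q) : (incidenceMatrix R δ *ᵥ v) q = ∑ a, v (δ q a) := by
  simp only [incidenceMatrix, mulVec, dotProduct, of_apply, card_filter, Nat.cast_sum,
    Nat.cast_ite, Nat.cast_one, Nat.cast_zero, sum_mul, ite_mul, one_mul, zero_mul]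
  rw [sum_comm]
  simp

theorem incidenceMatrix_pow_mulVec [Semiring R] [Fintype Q] (δ : Q → X → Q) (v : Q → R) (n : ℕ)
    (q : Q) : (incidenceMatrix R δ ^ n *ᵥ v) q = ∑ u ∈ level X n, v (u.foldl δ q) := by
  induction n generalizing q with
  | zero => simp
  | succ n ih =>
    rw [pow_succ', ← mulVec_mulVec, incidenceMatrix_mulVec, sum_level_succ]
    simp only [ih, List.foldl_cons]

end IncidenceMatrix

section CayleyHamilton

variable {R m n : Type*} [CommRing R] [Fintype m] [DecidableEq m] [Fintype n] [DecidableEq n]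

theorem map_pow_eq_zero_of_forall_lt_card {V : Type*} [AddCommGroup V] [Module R V]
    (A : Matrix n n R) (φ : Matrix n n R →ₗ[R] V) (h : ∀ j < Fintype.card n, φ (A ^ j) = 0)
    (i : ℕ) : φ (A ^ i) = 0 := by
  nontriviality R
  have hdeg : (Polynomial.X ^ i %ₘ A.charpoly).degree < Fintype.card n :=
    (Polynomial.degree_modByMonic_lt _ A.charpoly_monic).trans_eq A.charpoly_degree_eq_dim
  rw [A.pow_eq_aeval_mod_charpoly, Polynomial.aeval_eq_sum_range, map_sum]
  refine sum_eq_zero fun j _ => ?_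
  rw [map_smul]
  obtain hj | hj := lt_or_ge j (Fintype.card n)
  · rw [h j hj, smul_zero]
  · rw [Polynomial.coeff_eq_zero_of_degree_lt (hdeg.trans_le (Nat.cast_le.2 hj)), zero_smul]

theorem pow_mulVec_apply_eq_of_forall_le {A : Matrix m m R} {B : Matrix n n R} {v : m → R}
    {w : n → R} {a : m} {b : n} {N : ℕ}
    (hN : Nontrivial R → Fintype.card m + Fintype.card n ≤ N + 1)
    (h : ∀ j ≤ N, (A ^ j *ᵥ v) a = (B ^ j *ᵥ w) b) (i : ℕ) :
    (A ^ i *ᵥ v) a = (B ^ i *ᵥ w) b := by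
  nontriviality R
  let φ : Matrix (m ⊕ n) (m ⊕ n) R →ₗ[R] R :=
    (LinearMap.proj (.inl a) - LinearMap.proj (.inr b)) ∘ₗ (mulVecBilin R R).flip (Sum.elim v w)
  have hφ (j : ℕ) : φ (fromBlocks A 0 0 B ^ j) = (A ^ j *ᵥ v) a - (B ^ j *ᵥ w) b := by
    simp [φ, fromBlocks_diagonal_pow, fromBlocks_mulVec]
  have hcard : Fintype.card (m ⊕ n) ≤ N + 1 := Fintype.card_sum.trans_le (hN inferInstance)
  rw [← sub_eq_zero, ← hφ]
  refine map_pow_eq_zero_of_forall_lt_card _ φ (fun j hj => ?_) i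
  rw [hφ, sub_eq_zero]
  exact h j (by omega)

end CayleyHamilton

theorem finite_state_conjugate_iff_general
    {R Q₁ Q₂ : Type*} [CommRing R] [Fintype R]
    [Fintype Q₁] [DecidableEq Q₁] [Fintype Q₂] [DecidableEq Q₂]
    {δ₁ : Q₁ → R → Q₁} {δ₂ : Q₂ → R → Q₂} {c₁ : Q₁ → R} {c₂ : Q₂ → R} {q₁ : Q₁} {q₂ : Q₂}
    {act₁ : Q₁ → List R → List R} {act₂ : Q₂ → List R → List R}
    (hnil₁ : ∀ q, act₁ q [] = [])
    (hcons₁ : ∀ q a u, act₁ q (a :: u) = (a + c₁ q) :: act₁ (δ₁ q a) u)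
    (hnil₂ : ∀ q, act₂ q [] = [])
    (hcons₂ : ∀ q a u, act₂ q (a :: u) = (a + c₂ q) :: act₂ (δ₂ q a) u)
    {actP : (List R → R) → List R → List R}
    (hPnil : ∀ d, actP d [] = [])
    (hPcons : ∀ d a u, actP d (a :: u) = (a + d []) :: actP (fun w => d (a :: w)) u)
    (h₁ : IsSphericallyTransitive (act₁ q₁))
    {A₁ : Matrix Q₁ Q₁ R} (hA₁ : ∀ q r, A₁ q r = (#{a | δ₁ q a = r} : R))
    {A₂ : Matrix Q₂ Q₂ R} (hA₂ : ∀ q r, A₂ q r = (#{a | δ₂ q a = r} : R))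
    {N : ℕ} (hN : Nontrivial R → Fintype.card Q₁ + Fintype.card Q₂ ≤ N + 1) :
    (∃ d : List R → R, ∀ u, actP d (act₁ q₁ u) = act₂ q₂ (actP d u)) ↔
      ∀ j ≤ N, (A₁ ^ j *ᵥ c₁) q₁ = (A₂ ^ j *ᵥ c₂) q₂ := by
  obtain rfl : actP = Portrait.act := Portrait.eq_act hPnil hPcons
  obtain rfl : A₁ = incidenceMatrix R δ₁ := Matrix.ext hA₁
  obtain rfl : A₂ = incidenceMatrix R δ₂ := Matrix.ext hA₂
  rw [Portrait.eq_act_ofAutomaton hnil₁ hcons₁] at h₁ ⊢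
  rw [Portrait.eq_act_ofAutomaton hnil₂ hcons₂]
  refine (Portrait.exists_semiconj_act_iff h₁).trans ?_
  simp only [Portrait.ofAutomaton, ← incidenceMatrix_pow_mulVec]
  exact ⟨fun h j _ => h j, pow_mulVec_apply_eq_of_forall_le hN⟩

/-- Two spherically transitive finite state elements of the infinite iterated
wreath product `ℤ/kℤ ≀ ℤ/kℤ ≀ ⋯`, computed by finite invertible automata, are
conjugate if and only if the coefficients `((Aᵢ ^ j).mulVec vᵢ) qᵢ` agree for
all `j ≤ k ^ (card Q₁ + card Q₂)`. -/
theorem finite_state_conjugate_iff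
    (k : ℕ) [NeZero k]
    (Q₁ Q₂ : Type*) [Fintype Q₁] [DecidableEq Q₁] [Fintype Q₂] [DecidableEq Q₂]
    (δ₁ : Q₁ → ZMod k → Q₁) (δ₂ : Q₂ → ZMod k → Q₂)
    (c₁ : Q₁ → ZMod k) (c₂ : Q₂ → ZMod k) (q₁ : Q₁) (q₂ : Q₂)
    (act₁ : Q₁ → List (ZMod k) → List (ZMod k))
    (act₂ : Q₂ → List (ZMod k) → List (ZMod k))
    (hnil₁ : ∀ q, act₁ q [] = [])
    (hcons₁ : ∀ q a u, act₁ q (a :: u) = (a + c₁ q) :: act₁ (δ₁ q a) u)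
    (hnil₂ : ∀ q, act₂ q [] = [])
    (hcons₂ : ∀ q a u, act₂ q (a :: u) = (a + c₂ q) :: act₂ (δ₂ q a) u)
    (actP : (List (ZMod k) → ZMod k) → List (ZMod k) → List (ZMod k))
    (hPnil : ∀ d, actP d [] = [])
    (hPcons : ∀ d a u, actP d (a :: u) = (a + d []) :: actP (fun w => d (a :: w)) u)
    (h₁ : ∀ (n : ℕ) (u w : List (ZMod k)), u.length = n → w.length = n →
      ∃ m : ℕ, (act₁ q₁)^[m] u = w)
    (h₂ : ∀ (n : ℕ) (u w : List (ZMod k)), u.length = n → w.length = n →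
      ∃ m : ℕ, (act₂ q₂)^[m] u = w)
    (A₁ : Matrix Q₁ Q₁ (ZMod k))
    (hA₁ : ∀ q r, A₁ q r = ((Finset.univ.filter fun a : ZMod k => δ₁ q a = r).card : ZMod k))
    (A₂ : Matrix Q₂ Q₂ (ZMod k))
    (hA₂ : ∀ q r, A₂ q r = ((Finset.univ.filter fun a : ZMod k => δ₂ q a = r).card : ZMod k))
    (v₁ : Q₁ → ZMod k) (hv₁ : v₁ = c₁)
    (v₂ : Q₂ → ZMod k) (hv₂ : v₂ = c₂) :
    (∃ d : List (ZMod k) → ZMod k, ∀ u : List (ZMod k),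
        actP d (act₁ q₁ u) = act₂ q₂ (actP d u)) ↔
      (∀ j ≤ k ^ (Fintype.card Q₁ + Fintype.card Q₂),
        ((A₁ ^ j).mulVec v₁) q₁ = ((A₂ ^ j).mulVec v₂) q₂) := by
  subst hv₁ hv₂
  exact finite_state_conjugate_iff_general hnil₁ hcons₁ hnil₂ hcons₂ hPnil hPcons h₁ hA₁ hA₂
    fun _ => (Nat.lt_pow_self (ZMod.card k ▸ Fintype.one_lt_card)).le.trans (Nat.le_succ _)
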